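/- arXiv:1001.2751 — 3 statements merged into one kernel-verified Lean document; each statement's English description precedes it below -/
import Mathlib

section
/- Let κ > 0, s ∈ (0, 1/2), ϑ ∈ (s/2 + 1/4, 1/2), K ∈ ℕ and x, y ∈ (0,1). Then ∑_{i=1}^{K} (κ π² i²)^{-2ϑ} · (√2 sin(iπx) - √2 sin(iπy))² ≤ 3 (1 + κ^{-1}) · (∑_{i=1}^{∞} i^{2s - 4ϑ}) · |x - y|^{2s}, where the series on the right-hand side converges (since 2s - 4ϑ < -1). -/
open Real

/-- The increments of the sine are Hölder continuous of every exponent in `[0, 1]`. -/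
theorem sq_sin_sub_sin_le_rpow {s : ℝ} (hs0 : 0 ≤ s) (hs1 : s ≤ 1) (a b : ℝ) :
    (sin a - sin b) ^ 2 ≤ 4 * |a - b| ^ (2 * s) := by
  set m := |sin a - sin b| / 2 with hm
  have hm0 : 0 ≤ m := by positivity
  have hm1 : m ≤ 1 := by
    have : |sin a - sin b| ≤ 2 := by
      rw [abs_le]
      constructor <;> linarith [sin_le_one a, sin_le_one b, neg_one_le_sin a, neg_one_le_sin b]
    linarith
  have hmd : m ≤ |a - b| := by
    linarith [abs_sin_sub_sin_le a b, abs_nonneg (sin a - sin b)]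
  have hsq : (sin a - sin b) ^ 2 = 4 * m ^ (2 : ℝ) := by
    rw [rpow_two, hm, div_pow, sq_abs]
    ring
  have hpow : m ^ (2 : ℝ) ≤ m ^ (2 * s) := by
    rcases hm0.eq_or_lt with h | h
    · rw [← h, zero_rpow two_ne_zero]
      positivity
    · exact rpow_le_rpow_of_exponent_ge h hm1 (by linarith)
  rw [hsq]
  linarith [rpow_le_rpow hm0 hmd (by positivity : 0 ≤ 2 * s)]

/-- For `t ∈ [0, 1]` the power `κ ^ (-t)` is dominated by `1 + κ⁻¹`. -/
theorem rpow_neg_le_one_add_inv {κ t : ℝ} (hκ : 0 < κ) (ht0 : 0 ≤ t) (ht1 : t ≤ 1) :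
    κ ^ (-t) ≤ 1 + κ⁻¹ := by
  have hinv : 0 < κ⁻¹ := inv_pos.mpr hκ
  rw [rpow_neg hκ.le, ← inv_rpow hκ.le]
  rcases le_total κ⁻¹ 1 with h | h
  · linarith [rpow_le_one hinv.le h ht0]
  · have := rpow_le_rpow_of_exponent_le h ht1
    rw [rpow_one] at this
    linarith

/-- The bound on the variance of the increment of a single Fourier mode. -/
theorem eigenmode_increment_le {κ s ϑ : ℝ} (hκ : 0 < κ) (hs0 : 0 ≤ s) (hs1 : s ≤ 1)
    (hϑ0 : s / 2 + 1 / 4 ≤ ϑ) (hϑ1 : ϑ ≤ 1 / 2) {r : ℝ} (hr : 0 < r) (x y : ℝ) :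
    (κ * π ^ 2 * r ^ 2) ^ (-(2 * ϑ)) * (√2 * sin (r * π * x) - √2 * sin (r * π * y)) ^ 2
      ≤ 3 * (1 + κ⁻¹) * |x - y| ^ (2 * s) * r ^ (2 * s - 4 * ϑ) := by
  have hπ := pi_pos
  have hsin := sq_sin_sub_sin_le_rpow hs0 hs1 (r * π * x) (r * π * y)
  have habs : |r * π * x - r * π * y| ^ (2 * s) = r ^ (2 * s) * π ^ (2 * s) * |x - y| ^ (2 * s) := by
    rw [← mul_sub, abs_mul, abs_of_pos (by positivity), mul_rpow (by positivity) (abs_nonneg _),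
      mul_rpow hr.le hπ.le]
  have hsplit : (κ * π ^ 2 * r ^ 2) ^ (-(2 * ϑ))
      = κ ^ (-(2 * ϑ)) * π ^ (-(4 * ϑ)) * r ^ (-(4 * ϑ)) := by
    rw [mul_rpow (by positivity) (by positivity), mul_rpow hκ.le (by positivity),
      ← rpow_natCast π, ← rpow_natCast r, ← rpow_mul hπ.le, ← rpow_mul hr.le]
    congr 3 <;> push_cast <;> ring_nf
  have hpi : 8 * π ^ (2 * s - 4 * ϑ) ≤ 3 := by
    have h : π ^ (2 * s - 4 * ϑ) ≤ π ^ (-1 : ℝ) :=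
      rpow_le_rpow_of_exponent_le (by linarith [pi_gt_three]) (by linarith)
    rw [rpow_neg_one] at h
    have h3 : π⁻¹ ≤ 3⁻¹ := inv_anti₀ (by norm_num) pi_gt_three.le
    linarith
  calc (κ * π ^ 2 * r ^ 2) ^ (-(2 * ϑ)) * (√2 * sin (r * π * x) - √2 * sin (r * π * y)) ^ 2
      = (κ * π ^ 2 * r ^ 2) ^ (-(2 * ϑ)) * (2 * (sin (r * π * x) - sin (r * π * y)) ^ 2) := by
        rw [← mul_sub, mul_pow, sq_sqrt zero_le_two]
    _ ≤ (κ * π ^ 2 * r ^ 2) ^ (-(2 * ϑ)) * (2 * (4 * |r * π * x - r * π * y| ^ (2 * s))) := by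
        gcongr
    _ = 8 * π ^ (2 * s - 4 * ϑ) * κ ^ (-(2 * ϑ)) * |x - y| ^ (2 * s) * r ^ (2 * s - 4 * ϑ) := by
        rw [habs, hsplit, sub_eq_add_neg (2 * s), rpow_add hπ, rpow_add hr]
        ring
    _ ≤ 3 * (1 + κ⁻¹) * |x - y| ^ (2 * s) * r ^ (2 * s - 4 * ϑ) := by
        gcongr
        exact rpow_neg_le_one_add_inv hκ (by linarith) (by linarith)

/-- For `κ > 0`, `s ∈ (0, 1/2)`, `ϑ ∈ (s/2 + 1/4, 1/2)`, `K ∈ ℕ` and `x, y ∈ (0,1)`: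
`∑_{i=1}^K (κ π² i²)^{-2ϑ} (√2 sin(iπx) - √2 sin(iπy))²
  ≤ 3 (1 + κ⁻¹) (∑_{i=1}^∞ i^{2s - 4ϑ}) |x - y|^{2s}`,
where the series on the right-hand side converges. -/
theorem stmt_10 (κ s ϑ : ℝ) (hκ : 0 < κ) (hs0 : 0 < s) (hs1 : s < 1 / 2)
    (hϑ1 : s / 2 + 1 / 4 < ϑ) (hϑ2 : ϑ < 1 / 2) (K : ℕ) (x y : ℝ)
    (hx : x ∈ Set.Ioo (0 : ℝ) 1) (hy : y ∈ Set.Ioo (0 : ℝ) 1) :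
    Summable (fun i : ℕ+ => (i : ℝ) ^ (2 * s - 4 * ϑ)) ∧
      ∑ i ∈ Finset.Icc 1 K, (κ * π ^ 2 * (i : ℝ) ^ 2) ^ (-(2 * ϑ))
          * (Real.sqrt 2 * Real.sin ((i : ℝ) * π * x)
              - Real.sqrt 2 * Real.sin ((i : ℝ) * π * y)) ^ 2
        ≤ 3 * (1 + κ⁻¹) * (∑' i : ℕ+, (i : ℝ) ^ (2 * s - 4 * ϑ)) * |x - y| ^ (2 * s) := by
  have hsum : Summable (fun i : ℕ => (i : ℝ) ^ (2 * s - 4 * ϑ)) :=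
    Real.summable_nat_rpow.mpr (by linarith)
  refine ⟨hsum.comp_injective PNat.coe_injective, ?_⟩
  have htsum : ∑' i : ℕ+, (i : ℝ) ^ (2 * s - 4 * ϑ) = ∑' i : ℕ, (i : ℝ) ^ (2 * s - 4 * ϑ) := by
    have hzero : (0 : ℝ) ^ (2 * s - 4 * ϑ) = 0 := zero_rpow (by linarith)
    rw [← tsum_zero_pnat_eq_tsum_nat hsum, Nat.cast_zero, hzero, zero_add]
  rw [htsum, mul_right_comm]
  calc _ ≤ ∑ i ∈ Finset.Icc 1 K,
        3 * (1 + κ⁻¹) * |x - y| ^ (2 * s) * (i : ℝ) ^ (2 * s - 4 * ϑ) :=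
        Finset.sum_le_sum fun i hi => eigenmode_increment_le hκ hs0.le (by linarith) hϑ1.le hϑ2.le
          (Nat.cast_pos.mpr (Finset.mem_Icc.mp hi).1) x y
    _ ≤ _ := by
        rw [← Finset.mul_sum]
        gcongr
        exact hsum.sum_le_tsum _ fun i _ => by positivity
end

section
/- Let T > 0, M ∈ ℕ with M ≥ 1, h = T/M, m ∈ {1, …, M} and δ ∈ (0, 1/2). Then ∑_{l=0}^{m-1} ∫_{lh}^{(l+1)h} ( sup_{λ>0} λ^{-δ} ( e^{-λ(mh - s)} - e^{-λ(m-l)h} ) )² ds ≤ (2 + 1/(1 - 2δ)) · h^{1 + 2δ}. -/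
open Real

/-- Smoothing bound without time decay. -/
lemma rpow_neg_mul_exp_sub_exp_le {δ lam h a b : ℝ} (hδ0 : 0 ≤ δ) (hδ1 : δ ≤ 1)
    (hlam : 0 < lam) (hh : 0 < h) (ha : 0 ≤ a) (hb : b ≤ a + h) :
    lam ^ (-δ) * (exp (-lam * a) - exp (-lam * b)) ≤ h ^ δ := by
  have hy : 0 < lam * h := by positivity
  have h1 : exp (-lam * a) - exp (-lam * b) ≤ (lam * h) ^ δ := by
    have ha1 : exp (-lam * a) ≤ 1 := exp_le_one_iff.2 (by nlinarith)
    rcases le_total 1 (lam * h) with h1 | h1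
    · linarith [one_le_rpow h1 hδ0, exp_pos (-lam * b)]
    · have h2 : lam * h ≤ (lam * h) ^ δ := by
        simpa using rpow_le_rpow_of_exponent_ge hy h1 hδ1
      have h3 : exp (-lam * a) * exp (-(lam * h)) ≤ exp (-lam * b) := by
        rw [← exp_add]
        exact exp_le_exp.2 (by nlinarith)
      have h4 := add_one_le_exp (-(lam * h))
      nlinarith [exp_pos (-lam * a)]
  calc lam ^ (-δ) * (exp (-lam * a) - exp (-lam * b))
      ≤ lam ^ (-δ) * (lam * h) ^ δ := by gcongr
    _ = h ^ δ := by
      rw [mul_rpow hlam.le hh.le, ← mul_assoc, ← rpow_add hlam]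
      simp

/-- Smoothing bound with time decay. -/
lemma rpow_neg_mul_exp_sub_exp_le_of_le {δ lam h a b k : ℝ} (hδ0 : 0 ≤ δ) (hδ1 : δ ≤ 1)
    (hlam : 0 < lam) (hh : 0 < h) (hk : 0 < k) (ha : k * h ≤ a) (hb : b ≤ a + h) :
    lam ^ (-δ) * (exp (-lam * a) - exp (-lam * b)) ≤ k ^ (δ - 1) * h ^ δ := by
  set x := lam * (k * h) with hx
  have hx0 : 0 < x := by positivity
  have h1 : exp (-lam * a) - exp (-lam * b) ≤ exp (-x) * (lam * h) := by
    have h3 : exp (-lam * a) * exp (-(lam * h)) ≤ exp (-lam * b) := by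
      rw [← exp_add]
      exact exp_le_exp.2 (by nlinarith)
    have h4 := add_one_le_exp (-(lam * h))
    have h5 : exp (-lam * a) ≤ exp (-x) := exp_le_exp.2 (by nlinarith)
    have h6 : 0 < lam * h := by positivity
    nlinarith [exp_pos (-lam * a)]
  have h2 : x ^ (1 - δ) * exp (-x) ≤ 1 := by
    rw [exp_neg, ← div_eq_mul_inv, div_le_one (exp_pos x)]
    calc x ^ (1 - δ) ≤ exp x ^ (1 - δ) :=
          rpow_le_rpow hx0.le (by linarith [add_one_le_exp x]) (by linarith)
      _ = exp (x * (1 - δ)) := (exp_mul _ _).symm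
      _ ≤ exp x := exp_le_exp.2 (by nlinarith)
  have h3 : lam ^ (-δ) * (lam * h) = x ^ (1 - δ) * (k ^ (δ - 1) * h ^ δ) := by
    have e1 : lam ^ (1 - δ) = lam ^ (-δ) * lam := by
      rw [← rpow_add_one hlam.ne']
      ring_nf
    have e2 : k ^ (1 - δ) * k ^ (δ - 1) = 1 := by
      rw [← rpow_add hk]
      simp
    have e3 : h ^ (1 - δ) * h ^ δ = h := by
      rw [← rpow_add hh]
      simp
    rw [hx, mul_rpow hlam.le (by positivity), mul_rpow hk.le hh.le, e1]
    calc lam ^ (-δ) * (lam * h)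
        = lam ^ (-δ) * lam * (k ^ (1 - δ) * k ^ (δ - 1)) * (h ^ (1 - δ) * h ^ δ) := by
          rw [e2, e3]
          ring
      _ = _ := by ring
  calc lam ^ (-δ) * (exp (-lam * a) - exp (-lam * b))
      ≤ lam ^ (-δ) * (exp (-x) * (lam * h)) := by gcongr
    _ = lam ^ (-δ) * (lam * h) * exp (-x) := by ring
    _ = x ^ (1 - δ) * exp (-x) * (k ^ (δ - 1) * h ^ δ) := by
      rw [h3]
      ring
    _ ≤ 1 * (k ^ (δ - 1) * h ^ δ) := by gcongr
    _ = _ := one_mul _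

/-- Integral comparison for a convergent `p`-series, started at `2`. -/
lemma sum_range_add_two_rpow_le {q : ℝ} (hq : 0 < q) (n : ℕ) :
    ∑ i ∈ Finset.range n, ((i : ℝ) + 2) ^ (-q - 1) ≤ 1 / q := by
  have hanti : AntitoneOn (fun x : ℝ => x ^ (-q - 1)) (Set.Icc 1 (1 + n)) := by
    intro x hx y _ hxy
    exact rpow_le_rpow_of_nonpos (by linarith [hx.1]) hxy (by linarith)
  have hsum := hanti.sum_le_integral
  rw [integral_rpow (Or.inr ⟨by linarith, by
    rw [Set.uIcc_of_le (by simp)]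
    exact fun h => by linarith [h.1]⟩)] at hsum
  calc ∑ i ∈ Finset.range n, ((i : ℝ) + 2) ^ (-q - 1)
      = ∑ i ∈ Finset.range n, (1 + ((i + 1 : ℕ) : ℝ)) ^ (-q - 1) := by
        refine Finset.sum_congr rfl fun i _ => ?_
        push_cast
        ring_nf
    _ ≤ _ := hsum
    _ = (1 - (1 + (n : ℝ)) ^ (-q)) / q := by
      rw [one_rpow, show -q - 1 + 1 = -q by ring, div_neg, ← neg_div, neg_sub]
    _ ≤ 1 / q := by
      have : (0 : ℝ) ≤ (1 + (n : ℝ)) ^ (-q) := by positivity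
      gcongr
      linarith

lemma sum_range_ite_rpow_le {q : ℝ} (hq : 0 < q) (m : ℕ) :
    ∑ k ∈ Finset.range m, (if k = 0 then 1 else (k : ℝ) ^ (-q - 1)) ≤ 2 + 1 / q := by
  have hq' : 0 < 1 / q := by positivity
  rcases m with _ | _ | n
  · simp only [Finset.range_zero, Finset.sum_empty]
    linarith
  · simp only [zero_add, Finset.range_one, Finset.sum_singleton, if_true]
    linarith
  · have hsum := sum_range_add_two_rpow_le hq n
    rw [Finset.sum_range_succ', Finset.sum_range_succ']
    have : ∑ i ∈ Finset.range n,
        (if i + 1 + 1 = 0 then 1 else ((i + 1 + 1 : ℕ) : ℝ) ^ (-q - 1))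
        = ∑ i ∈ Finset.range n, ((i : ℝ) + 2) ^ (-q - 1) := by
      refine Finset.sum_congr rfl fun i _ => ?_
      rw [if_neg (by omega)]
      push_cast
      ring_nf
    rw [this]
    norm_num
    rw [one_div] at hsum
    linarith

/-- Deterministic core of the temporal discretization error bound for the diffusion term:
for `T > 0`, `M ≥ 1`, `h = T/M`, `m ∈ {1,…,M}` and `δ ∈ (0,1/2)` one has
`∑_{l=0}^{m-1} ∫_{lh}^{(l+1)h} (sup_{λ>0} λ^{-δ}(e^{-λ(mh-s)} - e^{-λ(m-l)h}))² ds
  ≤ (2 + 1/(1-2δ)) h^{1+2δ}`. -/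
theorem stmt_18 (T : ℝ) (hT : 0 < T) (M : ℕ) (hM : 1 ≤ M) (m : ℕ)
    (hm1 : 1 ≤ m) (hm2 : m ≤ M) (δ : ℝ) (hδ0 : 0 < δ) (hδ1 : δ < 1 / 2) :
    ∑ l ∈ Finset.range m,
        ∫ s in ((l : ℝ) * (T / M))..(((l : ℝ) + 1) * (T / M)),
          (⨆ lam : Set.Ioi (0 : ℝ),
            (lam : ℝ) ^ (-δ) *
              (Real.exp (-(lam : ℝ) * ((m : ℝ) * (T / M) - s))
                - Real.exp (-(lam : ℝ) * (((m : ℝ) - (l : ℝ)) * (T / M))))) ^ 2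
      ≤ (2 + 1 / (1 - 2 * δ)) * (T / M) ^ (1 + 2 * δ) := by
  have hM' : (0 : ℝ) < M := by exact_mod_cast hM
  set h := T / M
  have hh : 0 < h := by positivity
  have hterm : ∀ l ∈ Finset.range m,
      ∫ s in ((l : ℝ) * h)..(((l : ℝ) + 1) * h),
          (⨆ lam : Set.Ioi (0 : ℝ), (lam : ℝ) ^ (-δ) *
              (exp (-(lam : ℝ) * ((m : ℝ) * h - s))
                - exp (-(lam : ℝ) * (((m : ℝ) - (l : ℝ)) * h)))) ^ 2
        ≤ (if m - 1 - l = 0 then 1 else ((m - 1 - l : ℕ) : ℝ) ^ (-(1 - 2 * δ) - 1))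
          * h ^ (1 + 2 * δ) := by
    intro l hl
    obtain ⟨k, rfl⟩ : ∃ k, m = l + 1 + k := Nat.exists_eq_add_of_le (Finset.mem_range.1 hl)
    rw [show l + 1 + k - 1 - l = k by omega]
    set c : ℝ := if k = 0 then 1 else (k : ℝ) ^ (δ - 1) with hc
    have hc0 : 0 ≤ c := by
      rw [hc]
      split_ifs <;> positivity
    have hc2 : (if k = 0 then 1 else (k : ℝ) ^ (-(1 - 2 * δ) - 1)) = c ^ 2 := by
      rw [hc]
      split_ifs
      · simp
      · rw [← rpow_mul_natCast (by positivity)]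
        congr 1
        push_cast
        ring
    have hint := intervalIntegral.norm_integral_le_of_norm_le_const
      (a := (l : ℝ) * h) (b := ((l : ℝ) + 1) * h) (C := (c * h ^ δ) ^ 2)
      (f := fun s => (⨆ lam : Set.Ioi (0 : ℝ), (lam : ℝ) ^ (-δ) *
              (exp (-(lam : ℝ) * (((l + 1 + k : ℕ) : ℝ) * h - s))
                - exp (-(lam : ℝ) * ((((l + 1 + k : ℕ) : ℝ) - (l : ℝ)) * h)))) ^ 2) ?_
    · refine (le_abs_self _).trans (hint.trans_eq ?_)
      rw [hc2, show ((l : ℝ) + 1) * h - l * h = h by ring, abs_of_pos hh, rpow_add hh, rpow_one,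
        mul_pow, ← rpow_mul_natCast hh.le]
      push_cast
      ring_nf
    · intro s hs
      rw [Set.uIoc_of_le (by nlinarith)] at hs
      obtain ⟨hs1, hs2⟩ := hs
      have : Nonempty (Set.Ioi (0 : ℝ)) := ⟨⟨1, Set.mem_Ioi.2 one_pos⟩⟩
      rw [norm_pow, norm_eq_abs, sq_abs]
      push_cast
      refine pow_le_pow_left₀ (Real.iSup_nonneg fun lam => ?_) (ciSup_le fun lam => ?_) 2
      · have hlam : (0 : ℝ) < lam := lam.2
        refine mul_nonneg (by positivity) (sub_nonneg.2 (exp_le_exp.2 ?_))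
        nlinarith
      · have hlam : (0 : ℝ) < lam := lam.2
        have ha : (k : ℝ) * h ≤ ((l : ℝ) + 1 + k) * h - s := by nlinarith
        rw [hc]
        split_ifs with hk
        · rw [one_mul]
          exact rpow_neg_mul_exp_sub_exp_le hδ0.le (by linarith) hlam hh
            (le_trans (by positivity) ha) (by nlinarith)
        · exact rpow_neg_mul_exp_sub_exp_le_of_le hδ0.le (by linarith) hlam hh
            (by positivity) ha (by nlinarith)
  refine (Finset.sum_le_sum hterm).trans ?_
  rw [← Finset.sum_mul, Finset.sum_range_reflect
    (fun k : ℕ => if k = 0 then 1 else (k : ℝ) ^ (-(1 - 2 * δ) - 1))]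
  gcongr
  exact sum_range_ite_rpow_le (by linarith) m
end

section
/- Let T > 0, M ∈ ℕ with M ≥ 2, h = T/M and m ∈ {2, …, M}. Then ∑_{l=0}^{m-2} ∫_{lh}^{(l+1)h} ( sup_{λ>0} ( e^{-λ(mh - s)} - e^{-λ(m-l)h} ) ) ds ≤ (h/2)·(1 + ln(M)). -/
theorem exp_neg_mul_sub_exp_neg_mul_le {a b : ℝ} (ha : 0 < a) (hab : a ≤ b) (x : ℝ) :
    Real.exp (-x * a) - Real.exp (-x * b) ≤ (b - a) / a := by
  have hsplit : Real.exp (-x * b) = Real.exp (-x * a) * Real.exp (-(x * (b - a))) := by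
    rw [← Real.exp_add]
    ring_nf
  have hlinear : 1 - Real.exp (-(x * (b - a))) ≤ x * (b - a) := by
    linarith [Real.add_one_le_exp (-(x * (b - a)))]
  have hdecay : x * a * Real.exp (-x * a) ≤ 1 := by
    have hinv : Real.exp (x * a) * Real.exp (-x * a) = 1 := by
      rw [← Real.exp_add]
      simp
    rw [← hinv]
    gcongr
    linarith [Real.add_one_le_exp (x * a)]
  rw [le_div_iff₀ ha, hsplit]
  calc (Real.exp (-x * a) - Real.exp (-x * a) * Real.exp (-(x * (b - a)))) * a
      = Real.exp (-x * a) * (1 - Real.exp (-(x * (b - a)))) * a := by ring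
    _ ≤ Real.exp (-x * a) * (x * (b - a)) * a := by gcongr
    _ = x * a * Real.exp (-x * a) * (b - a) := by ring
    _ ≤ 1 * (b - a) := by gcongr
    _ = b - a := one_mul _

theorem integral_iSup_exp_sub_exp_le {h c l : ℝ} (hh : 0 < h) (hlc : 0 < c - l - 1) :
    ∫ s in (l * h)..((l + 1) * h),
        (⨆ lam : Set.Ioi (0 : ℝ),
          (Real.exp (-(lam : ℝ) * (c * h - s)) - Real.exp (-(lam : ℝ) * ((c - l) * h))))
      ≤ h / 2 * (c - l - 1)⁻¹ := by
  have hle : l * h ≤ (l + 1) * h := by nlinarith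
  have hpos : 0 < (c - l - 1) * h := mul_pos hlc hh
  have hint : ∫ s in (l * h)..((l + 1) * h), (s - l * h) / ((c - l - 1) * h)
      = h / 2 * (c - l - 1)⁻¹ := by
    rw [intervalIntegral.integral_div, intervalIntegral.integral_sub (by simp) (by simp),
      integral_id, intervalIntegral.integral_const, smul_eq_mul]
    field_simp
    ring
  rw [← hint, intervalIntegral.integral_of_le hle, intervalIntegral.integral_of_le hle]
  apply MeasureTheory.integral_mono_of_nonneg
  · refine (MeasureTheory.ae_restrict_iff' measurableSet_Ioc).2 (.of_forall fun s hs => ?_)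
    refine Real.iSup_nonneg fun lam => sub_nonneg.2 (Real.exp_le_exp.2 ?_)
    have hlam : (0 : ℝ) < lam := lam.2
    nlinarith [hs.1]
  · exact (Continuous.integrableOn_Icc (by fun_prop)).mono_set Set.Ioc_subset_Icc_self
  · refine (MeasureTheory.ae_restrict_iff' measurableSet_Ioc).2 (.of_forall fun s hs => ?_)
    have : Nonempty (Set.Ioi (0 : ℝ)) := ⟨⟨1, Set.mem_Ioi.2 one_pos⟩⟩
    have hgap : (c - l - 1) * h ≤ c * h - s := by linarith [hs.2]
    refine ciSup_le fun lam => (exp_neg_mul_sub_exp_neg_mul_le (hpos.trans_le hgap)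
      (by linarith [hs.1]) lam).trans ?_
    have hnum : (c - l) * h - (c * h - s) = s - l * h := by ring
    rw [hnum]
    exact div_le_div_of_nonneg_left (by linarith [hs.1]) hpos hgap


/-- Deterministic core of the drift temporal discretization error estimate:
for `T > 0`, `M ≥ 2`, `h = T/M` and `m ∈ {2,…,M}` one has
`∑_{l=0}^{m-2} ∫_{lh}^{(l+1)h} (sup_{λ>0} (e^{-λ(mh-s)} - e^{-λ(m-l)h})) ds
  ≤ (h/2)(1 + ln M)`. -/
theorem stmt_19 (T : ℝ) (hT : 0 < T) (M : ℕ) (hM : 2 ≤ M) (m : ℕ)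
    (hm1 : 2 ≤ m) (hm2 : m ≤ M) :
    ∑ l ∈ Finset.range (m - 1),
        ∫ s in ((l : ℝ) * (T / M))..(((l : ℝ) + 1) * (T / M)),
          (⨆ lam : Set.Ioi (0 : ℝ),
            (Real.exp (-(lam : ℝ) * ((m : ℝ) * (T / M) - s))
              - Real.exp (-(lam : ℝ) * (((m : ℝ) - (l : ℝ)) * (T / M)))))
      ≤ ((T / M) / 2) * (1 + Real.log M) := by
  have hM0 : (0 : ℝ) < M := by exact_mod_cast (by omega : 0 < M)
  have hh : 0 < T / M := div_pos hT hM0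
  calc _ ≤ ∑ l ∈ Finset.range (m - 1), T / M / 2 * ((m : ℝ) - l - 1)⁻¹ := by
        refine Finset.sum_le_sum fun l hl => integral_iSup_exp_sub_exp_le hh ?_
        have hlm : l + 1 < m := by
          have := Finset.mem_range.1 hl
          omega
        have : (l : ℝ) + 1 < m := by exact_mod_cast hlm
        linarith
    _ = T / M / 2 * (harmonic (m - 1) : ℝ) := by
        rw [← Finset.mul_sum, harmonic, ← Finset.sum_range_reflect]
        push_cast
        congr 1
        refine Finset.sum_congr rfl fun l hl => ?_
        have hlm := Finset.mem_range.1 hl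
        have hcast : ((m - 1 - 1 - l : ℕ) : ℝ) = m - l - 2 := by
          rw [show m - 1 - 1 - l = m - (l + 2) by omega, Nat.cast_sub (by omega)]
          push_cast
          ring
        rw [hcast]
        ring_nf
    _ ≤ T / M / 2 * (1 + Real.log M) := by
        gcongr
        refine (harmonic_le_one_add_log (m - 1)).trans ?_
        gcongr
        · exact_mod_cast (by omega : 0 < m - 1)
        · omega
end
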